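/- Let N ≥ 3, α ∈ (0,N), p ∈ [1, (N+α)/(N−2)], and let {uₙ} be bounded in L^{2Np/(N+α)}(ℝᴺ) with uₙ → u almost everywhere on ℝᴺ. Then ∫(I_α*|uₙ|^p)|uₙ|^p − ∫(I_α*|uₙ−u|^p)|uₙ−u|^p → ∫(I_α*|u|^p)|u|^p (Brezis–Lieb lemma for the Riesz potential energy). -/

import Mathlib

open MeasureTheory Filter

/-- The normalization constant `C̄` of the Riesz potential `I_α`. -/
noncomputable def rieszConst (N : ℕ) (α : ℝ) : ℝ :=
  Real.Gamma (((N:ℝ) - α) / 2) / (Real.Gamma (α / 2) * Real.pi ^ ((N:ℝ) / 2) * 2 ^ α)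

/-- The Riesz potential energy `∫ (I_α * |u|^p) |u|^p`. -/
noncomputable def nonlocalB (N : ℕ) (α p : ℝ) (u : EuclideanSpace ℝ (Fin N) → ℝ) : ℝ :=
  ∫ x : EuclideanSpace ℝ (Fin N), ∫ y : EuclideanSpace ℝ (Fin N),
    rieszConst N α * |u x| ^ p * |u y| ^ p * ‖x - y‖ ^ (α - (N:ℝ))

/-- The Riesz kernel `‖z‖ ^ (α - N)` as an extended nonnegative function, without normalization. -/
noncomputable def rieszKernel (N : ℕ) (α : ℝ) (z : EuclideanSpace ℝ (Fin N)) : ENNReal :=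
  ENNReal.ofReal (‖z‖ ^ (α - (N:ℝ)))

/-- The bilinear energy `∫∫ f(x) g(y) ‖x - y‖ ^ (α - N)` of nonnegative functions. -/
noncomputable def rieszEnergy (N : ℕ) (α : ℝ) (f g : EuclideanSpace ℝ (Fin N) → ENNReal) :
    ENNReal :=
  ∫⁻ z : EuclideanSpace ℝ (Fin N) × EuclideanSpace ℝ (Fin N),
    f z.1 * g z.2 * rieszKernel N α (z.1 - z.2)

theorem measurable_rieszKernel (N : ℕ) (α : ℝ) : Measurable (rieszKernel N α) := by
  unfold rieszKernel
  fun_prop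

theorem rieszKernel_sub_comm (N : ℕ) (α : ℝ) (x y : EuclideanSpace ℝ (Fin N)) :
    rieszKernel N α (x - y) = rieszKernel N α (y - x) := by
  simp only [rieszKernel, norm_sub_rev]

theorem rieszKernel_smul (N : ℕ) (α : ℝ) {R : ℝ} (hR : 0 < R) (z : EuclideanSpace ℝ (Fin N)) :
    rieszKernel N α (R • z) = ENNReal.ofReal R ^ (α - (N:ℝ)) * rieszKernel N α z := by
  rw [rieszKernel, rieszKernel, norm_smul, Real.norm_of_nonneg hR.le,
    Real.mul_rpow hR.le (norm_nonneg z), ENNReal.ofReal_mul (by positivity),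
    ENNReal.ofReal_rpow_of_pos hR]

theorem lintegral_comp_inv_smul (N : ℕ) (G : EuclideanSpace ℝ (Fin N) → ENNReal) {R : ℝ}
    (hR : 0 < R) : ∫⁻ z, G (R⁻¹ • z) = ENNReal.ofReal R ^ (N:ℝ) * ∫⁻ z, G z := by
  have hR' : R⁻¹ ≠ 0 := by positivity
  have hemb : MeasurableEmbedding (fun z : EuclideanSpace ℝ (Fin N) => R⁻¹ • z) :=
    (Homeomorph.smulOfNeZero R⁻¹ hR').measurableEmbedding
  rw [← hemb.lintegral_map G, Measure.map_addHaar_smul _ hR', lintegral_smul_measure]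
  simp only [finrank_euclideanSpace, Fintype.card_fin, smul_eq_mul, ENNReal.rpow_natCast]
  rw [← ENNReal.ofReal_pow hR.le, inv_pow, inv_inv, abs_of_pos (by positivity)]

theorem exists_lintegral_rieszKernel_near_le {N : ℕ} (hN : 1 ≤ N) {α : ℝ} (hα : 0 < α) :
    ∃ c : ENNReal, c ≠ ⊤ ∧ ∀ (x : EuclideanSpace ℝ (Fin N)) (R : ℝ), 0 < R →
      ∫⁻ y in {y | ‖x - y‖ < R}, rieszKernel N α (x - y) ≤ c * ENNReal.ofReal R ^ α := by
  refine ⟨∫⁻ z in Metric.ball 0 1, rieszKernel N α z, ?_, fun x R hR => le_of_eq ?_⟩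
  · have h : IntegrableOn (fun z : EuclideanSpace ℝ (Fin N) => ‖z‖ ^ (α - (N:ℝ)))
        (Metric.ball 0 1) := by
      refine integrableOn_ball_of_norm_le_rpow (C := 1) (α := (N:ℝ) - α) (by simpa using hN)
        (by simpa using hα) (ae_of_all _ fun z => ?_)
        (measurable_norm.pow_const _).aestronglyMeasurable
      rw [Real.norm_of_nonneg (by positivity), one_mul, neg_sub]
    exact (Integrable.lintegral_lt_top h).ne
  · have hs : MeasurableSet {y | ‖x - y‖ < R} := measurableSet_lt (by fun_prop) (by fun_prop)
    rw [← lintegral_indicator hs, ← lintegral_indicator measurableSet_ball]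
    have h1 : ∀ y, Set.indicator {y | ‖x - y‖ < R} (fun y => rieszKernel N α (x - y)) y =
        (fun z => ENNReal.ofReal R ^ (α - (N:ℝ)) *
          (Metric.ball 0 1).indicator (rieszKernel N α) (R⁻¹ • z)) (x - y) := by
      intro y
      have h2 : R⁻¹ • (x - y) ∈ Metric.ball (0 : EuclideanSpace ℝ (Fin N)) 1 ↔
          y ∈ {y | ‖x - y‖ < R} := by
        simp [norm_smul, abs_of_pos hR, inv_mul_lt_iff₀ hR]
      by_cases hy : y ∈ {y | ‖x - y‖ < R}
      · simp only [Set.indicator_of_mem hy, Set.indicator_of_mem (h2.2 hy)]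
        rw [← rieszKernel_smul N α hR, smul_inv_smul₀ hR.ne']
      · simp only [Set.indicator_of_notMem hy, Set.indicator_of_notMem (mt h2.1 hy), mul_zero]
    rw [lintegral_congr h1, lintegral_sub_left_eq_self (fun z => ENNReal.ofReal R ^ (α - (N:ℝ)) *
          (Metric.ball 0 1).indicator (rieszKernel N α) (R⁻¹ • z)) x,
      lintegral_const_mul' _ _ (ENNReal.rpow_ne_top_of_ne_zero (by simpa using hR) (by simp)),
      lintegral_comp_inv_smul N _ hR, ← mul_assoc, ← ENNReal.rpow_add _ _ (by simpa using hR)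
      (by simp), mul_comm]
    simp

theorem exists_lintegral_rieszKernel_rpow_far_le {N : ℕ} {α s : ℝ} (hs : 0 < s)
    (hαs : (N:ℝ) < ((N:ℝ) - α) * s) :
    ∃ c : ENNReal, c ≠ ⊤ ∧ ∀ (x : EuclideanSpace ℝ (Fin N)) (R : ℝ), 0 < R →
      ∫⁻ y in {y | R ≤ ‖x - y‖}, rieszKernel N α (x - y) ^ s ≤
        c * ENNReal.ofReal R ^ ((N:ℝ) - ((N:ℝ) - α) * s) := by
  have hm : MeasurableSet {z : EuclideanSpace ℝ (Fin N) | 1 ≤ ‖z‖} :=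
    measurableSet_le (by fun_prop) (by fun_prop)
  refine ⟨∫⁻ z in {z | 1 ≤ ‖z‖}, rieszKernel N α z ^ s, ?_, fun x R hR => le_of_eq ?_⟩
  · have h := finite_integral_one_add_norm (E := EuclideanSpace ℝ (Fin N)) (μ := volume)
      (r := ((N:ℝ) - α) * s) (by simpa using hαs)
    refine ne_top_of_le_ne_top (ENNReal.mul_ne_top
      (ENNReal.ofReal_ne_top (r := 2 ^ (((N:ℝ) - α) * s))) h.ne) ?_
    rw [← lintegral_const_mul' _ _ ENNReal.ofReal_ne_top]
    refine (setLIntegral_mono_ae' hm (ae_of_all _ fun z (hz : 1 ≤ ‖z‖) => ?_)).trans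
      (setLIntegral_le_lintegral _ _)
    have hz0 : 0 < ‖z‖ := by linarith
    rw [rieszKernel, ENNReal.ofReal_rpow_of_nonneg (by positivity) hs.le,
      ← ENNReal.ofReal_mul (by positivity), ← Real.rpow_mul hz0.le]
    refine ENNReal.ofReal_le_ofReal ?_
    have h3 : (0:ℝ) ≤ ((N:ℝ) - α) * s := (Nat.cast_nonneg N).trans hαs.le
    rw [show (α - (N:ℝ)) * s = -(((N:ℝ) - α) * s) by ring, Real.rpow_neg hz0.le,
      Real.rpow_neg (by positivity), ← div_eq_mul_inv, inv_eq_one_div,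
      div_le_div_iff₀ (by positivity) (by positivity), one_mul,
      ← Real.mul_rpow (by positivity) hz0.le]
    exact Real.rpow_le_rpow (by positivity) (by linarith) h3
  · have hs' : MeasurableSet {y | R ≤ ‖x - y‖} := measurableSet_le (by fun_prop) (by fun_prop)
    rw [← lintegral_indicator hs', ← lintegral_indicator hm]
    have h1 : ∀ y, Set.indicator {y | R ≤ ‖x - y‖} (fun y => rieszKernel N α (x - y) ^ s) y =
        (fun z => ENNReal.ofReal R ^ ((α - (N:ℝ)) * s) *
          Set.indicator {z : EuclideanSpace ℝ (Fin N) | 1 ≤ ‖z‖}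
            (fun z => rieszKernel N α z ^ s) (R⁻¹ • z)) (x - y) := by
      intro y
      have h2 : R⁻¹ • (x - y) ∈ {z : EuclideanSpace ℝ (Fin N) | 1 ≤ ‖z‖} ↔
          y ∈ {y | R ≤ ‖x - y‖} := by
        simp [norm_smul, abs_of_pos hR, le_inv_mul_iff₀ hR]
      by_cases hy : y ∈ {y | R ≤ ‖x - y‖}
      · simp only [Set.indicator_of_mem hy, Set.indicator_of_mem (h2.2 hy)]
        rw [ENNReal.rpow_mul, ← ENNReal.mul_rpow_of_nonneg _ _ hs.le, ← rieszKernel_smul N α hR,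
          smul_inv_smul₀ hR.ne']
      · simp only [Set.indicator_of_notMem hy, Set.indicator_of_notMem (mt h2.1 hy), mul_zero]
    rw [lintegral_congr h1,
      lintegral_sub_left_eq_self (fun z => ENNReal.ofReal R ^ ((α - (N:ℝ)) * s) *
          Set.indicator {z : EuclideanSpace ℝ (Fin N) | 1 ≤ ‖z‖}
            (fun z => rieszKernel N α z ^ s) (R⁻¹ • z)) x,
      lintegral_const_mul' _ _ (ENNReal.rpow_ne_top_of_ne_zero (by simpa using hR) (by simp)),
      lintegral_comp_inv_smul N _ hR, ← mul_assoc, ← ENNReal.rpow_add _ _ (by simpa using hR)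
      (by simp), mul_comm]
    congr 2
    ring

theorem rieszEnergy_comm (N : ℕ) (α : ℝ) (f g : EuclideanSpace ℝ (Fin N) → ENNReal) :
    rieszEnergy N α f g = rieszEnergy N α g f := by
  rw [rieszEnergy, rieszEnergy, Measure.volume_eq_prod, ← lintegral_prod_swap]
  refine lintegral_congr fun z => ?_
  simp only [Prod.fst_swap, Prod.snd_swap]
  rw [rieszKernel_sub_comm, mul_comm (f _)]

theorem rieszEnergy_mono {N : ℕ} {α : ℝ} {f₁ f₂ g₁ g₂ : EuclideanSpace ℝ (Fin N) → ENNReal}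
    (hf : ∀ x, f₁ x ≤ f₂ x) (hg : ∀ x, g₁ x ≤ g₂ x) :
    rieszEnergy N α f₁ g₁ ≤ rieszEnergy N α f₂ g₂ :=
  lintegral_mono fun z => mul_le_mul' (mul_le_mul' (hf z.1) (hg z.2)) le_rfl

theorem aemeasurable_rieszEnergy_integrand {N : ℕ} (α : ℝ)
    {f g : EuclideanSpace ℝ (Fin N) → ENNReal}
    (hf : AEMeasurable f volume) (hg : AEMeasurable g volume) :
    AEMeasurable (fun z : EuclideanSpace ℝ (Fin N) × EuclideanSpace ℝ (Fin N) =>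
      f z.1 * g z.2 * rieszKernel N α (z.1 - z.2)) volume :=
  ((hf.comp_fst).mul (hg.comp_snd)).mul
    ((measurable_rieszKernel N α).comp (measurable_fst.sub measurable_snd)).aemeasurable

theorem hardyLittlewoodSobolev_holderConjugate {N : ℕ} {α : ℝ} (hα : α ∈ Set.Ioo (0:ℝ) N) :
    (2 * (N:ℝ) / ((N:ℝ) + α)).HolderConjugate (2 * (N:ℝ) / ((N:ℝ) - α)) := by
  obtain ⟨h0, h1⟩ := hα
  have hN : (0:ℝ) < N := h0.trans h1
  have h2 : (0:ℝ) < N - α := by linarith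
  rw [Real.holderConjugate_iff]
  constructor
  · rw [lt_div_iff₀ (by linarith)]
    linarith
  · field_simp
    ring

theorem exists_lintegral_restrict_le_rieszKernel_le {N : ℕ} {α : ℝ}
    (hα : α ∈ Set.Ioo (0:ℝ) N) :
    ∃ c : ENNReal, c ≠ ⊤ ∧ ∀ f : EuclideanSpace ℝ (Fin N) → ENNReal, AEMeasurable f volume →
      ∀ x, ∫⁻ y, Set.indicator {y | f y ≤ f x}
          (fun y => f x * f y * rieszKernel N α (x - y)) y ≤
        f x ^ (2 * (N:ℝ) / ((N:ℝ) + α)) * (c * (1 +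
          (∫⁻ y, f y ^ (2 * (N:ℝ) / ((N:ℝ) + α))) ^ (1 / (2 * (N:ℝ) / ((N:ℝ) + α))))) := by
  have hpq := hardyLittlewoodSobolev_holderConjugate hα
  obtain ⟨h0, h1⟩ := hα
  have hN : (0:ℝ) < N := h0.trans h1
  have h2 : (0:ℝ) < N - α := by linarith
  obtain ⟨c₁, hc₁, hnear⟩ := exists_lintegral_rieszKernel_near_le (N := N) (by exact_mod_cast hN) h0
  obtain ⟨c₂, hc₂, hfar⟩ := exists_lintegral_rieszKernel_rpow_far_le (N := N) (α := α)
    (s := 2 * (N:ℝ) / ((N:ℝ) - α)) hpq.symm.pos (by rw [mul_div_cancel₀ _ h2.ne']; linarith)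
  rw [mul_div_cancel₀ _ h2.ne'] at hfar
  set q : ℝ := 2 * (N:ℝ) / ((N:ℝ) + α) with hq
  set q' : ℝ := 2 * (N:ℝ) / ((N:ℝ) - α) with hq'
  refine ⟨1 + c₁ + c₂ ^ (1 / q'), by simp [hc₁, hc₂, hpq.symm.pos.le], fun f hf x => ?_⟩
  set S : ENNReal := (∫⁻ y, f y ^ q) ^ (1 / q) with hS
  rcases eq_or_ne (f x) 0 with hx0 | hx0
  · simp [hx0]
  rcases eq_or_ne (f x) ⊤ with hxt | hxt
  · rw [hxt, ENNReal.top_rpow_of_pos hpq.pos, ENNReal.top_mul (by simp)]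
    exact le_top
  set t := f x with ht
  set r : ENNReal := t ^ (-2 / ((N:ℝ) + α)) with hr
  have hrt : r ≠ ⊤ := ENNReal.rpow_ne_top_of_ne_zero hx0 hxt
  have hr0 : r ≠ 0 := (ENNReal.rpow_pos (pos_iff_ne_zero.2 hx0) hxt).ne'
  have hR : 0 < r.toReal := ENNReal.toReal_pos hr0 hrt
  have hnear := hnear x r.toReal hR
  have hfar := hfar x r.toReal hR
  rw [ENNReal.ofReal_toReal hrt] at hnear hfar
  have hms : MeasurableSet {y | ‖x - y‖ < r.toReal} :=
    measurableSet_lt (by fun_prop) (by fun_prop)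
  have hk : Measurable fun y => rieszKernel N α (x - y) :=
    (measurable_rieszKernel N α).comp (by fun_prop)
  have hcompl : {y | ‖x - y‖ < r.toReal}ᶜ = {y | r.toReal ≤ ‖x - y‖} := by
    ext y
    simp
  have hA : ∫⁻ y in {y | ‖x - y‖ < r.toReal}, Set.indicator {y | f y ≤ t}
      (fun y => t * f y * rieszKernel N α (x - y)) y ≤ t ^ q * c₁ := by
    calc _ ≤ ∫⁻ y in {y | ‖x - y‖ < r.toReal}, t * t * rieszKernel N α (x - y) := by
          refine lintegral_mono fun y => ?_
          by_cases hy : f y ≤ t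
          · rw [Set.indicator_of_mem (by exact hy)]
            gcongr
          · rw [Set.indicator_of_notMem (by exact hy)]
            exact zero_le
      _ ≤ t * t * (c₁ * r ^ α) := by
          rw [lintegral_const_mul _ hk]
          gcongr
      _ = t ^ q * c₁ := by
          have : t * t * r ^ α = t ^ q := by
            rw [hr, ← ENNReal.rpow_mul]
            nth_rewrite 1 2 [← ENNReal.rpow_one t]
            rw [← ENNReal.rpow_add _ _ hx0 hxt, ← ENNReal.rpow_add _ _ hx0 hxt]
            congr 1
            rw [hq]
            field_simp
            ring
          rw [← this]
          ring
  have hB : ∫⁻ y in {y | r.toReal ≤ ‖x - y‖}, Set.indicator {y | f y ≤ t}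
      (fun y => t * f y * rieszKernel N α (x - y)) y ≤ t ^ q * (c₂ ^ (1 / q') * S) := by
    calc _ ≤ ∫⁻ y in {y | r.toReal ≤ ‖x - y‖}, t * (f * fun y => rieszKernel N α (x - y)) y := by
          refine lintegral_mono fun y => (Set.indicator_le_self _ _ y).trans ?_
          simp [mul_assoc]
      _ ≤ t * (S * (c₂ * r ^ ((N:ℝ) - 2 * N)) ^ (1 / q')) := by
          rw [lintegral_const_mul' _ _ hxt]
          gcongr
          refine (ENNReal.lintegral_mul_le_Lp_mul_Lq _ hpq hf.restrict hk.aemeasurable).trans ?_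
          have := hpq.pos
          have := hpq.symm.pos
          rw [hS]
          gcongr
          exact Measure.restrict_le_self
      _ = t ^ q * (c₂ ^ (1 / q') * S) := by
          have : t * (r ^ ((N:ℝ) - 2 * N)) ^ (1 / q') = t ^ q := by
            rw [hr, ← ENNReal.rpow_mul, ← ENNReal.rpow_mul]
            nth_rewrite 1 [← ENNReal.rpow_one t]
            rw [← ENNReal.rpow_add _ _ hx0 hxt]
            congr 1
            rw [hq, hq']
            field_simp
            ring
          rw [← this, ENNReal.mul_rpow_of_nonneg _ _ (by have := hpq.symm.pos; positivity)]
          ring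
  rw [← lintegral_add_compl _ hms, hcompl]
  refine (add_le_add hA hB).trans ?_
  rw [← mul_add]
  gcongr
  calc c₁ + c₂ ^ (1 / q') * S ≤ c₁ + c₂ ^ (1 / q') * S + (1 + c₂ ^ (1 / q') + (1 + c₁) * S) :=
        le_self_add
    _ = _ := by ring

theorem exists_rieszEnergy_self_le {N : ℕ} {α : ℝ} (hα : α ∈ Set.Ioo (0:ℝ) N) :
    ∃ c : ENNReal, c ≠ ⊤ ∧ ∀ f : EuclideanSpace ℝ (Fin N) → ENNReal, AEMeasurable f volume →
      rieszEnergy N α f f ≤ c * (1 +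
          (∫⁻ y, f y ^ (2 * (N:ℝ) / ((N:ℝ) + α))) ^ (1 / (2 * (N:ℝ) / ((N:ℝ) + α)))) *
        ∫⁻ y, f y ^ (2 * (N:ℝ) / ((N:ℝ) + α)) := by
  obtain ⟨c, hc, h⟩ := exists_lintegral_restrict_le_rieszKernel_le hα
  refine ⟨2 * c, ENNReal.mul_ne_top (by simp) hc, fun f hf => ?_⟩
  set q : ℝ := 2 * (N:ℝ) / ((N:ℝ) + α) with hq
  set S : ENNReal := ∫⁻ y, f y ^ q with hS
  set A : EuclideanSpace ℝ (Fin N) × EuclideanSpace ℝ (Fin N) → ENNReal :=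
    Set.indicator {z | f z.2 ≤ f z.1} (fun z => f z.1 * f z.2 * rieszKernel N α (z.1 - z.2))
    with hA
  have hAm : AEMeasurable A (volume.prod volume) :=
    (aemeasurable_rieszEnergy_integrand α hf hf).indicator₀
      (nullMeasurableSet_le hf.comp_snd hf.comp_fst)
  have hle : ∀ z : EuclideanSpace ℝ (Fin N) × EuclideanSpace ℝ (Fin N),
      f z.1 * f z.2 * rieszKernel N α (z.1 - z.2) ≤ A z + A z.swap := by
    intro z
    rcases le_total (f z.2) (f z.1) with hz | hz
    · rw [hA, Set.indicator_of_mem (by exact hz)]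
      exact le_self_add
    · refine le_add_left ?_
      rw [hA, Set.indicator_of_mem (by exact hz)]
      simp only [Prod.fst_swap, Prod.snd_swap]
      rw [rieszKernel_sub_comm, mul_comm (f _)]
  have hA_le : ∫⁻ z, A z ∂(volume.prod volume) ≤ c * (1 + S ^ (1 / q)) * S := by
    rw [lintegral_prod _ hAm]
    calc _ ≤ ∫⁻ x, f x ^ q * (c * (1 + S ^ (1 / q))) := lintegral_mono fun x => h f hf x
      _ = c * (1 + S ^ (1 / q)) * S := by
        rw [lintegral_mul_const'' _ (hf.pow_const q), mul_comm]
  calc rieszEnergy N α f f ≤ ∫⁻ z, A z + A z.swap ∂(volume.prod volume) := lintegral_mono hle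
    _ = ∫⁻ z, A z ∂(volume.prod volume) + ∫⁻ z, A z ∂(volume.prod volume) := by
      rw [lintegral_add_left' hAm, lintegral_prod_swap]
    _ ≤ c * (1 + S ^ (1 / q)) * S + c * (1 + S ^ (1 / q)) * S := add_le_add hA_le hA_le
    _ = 2 * c * (1 + S ^ (1 / q)) * S := by ring

theorem tendsto_lintegral_zero_of_le_add {X : Type*} [MeasurableSpace X] {μ : Measure X}
    {F H : ℕ → X → ENNReal} {M : ENNReal} (hF : ∀ n, AEMeasurable (F n) μ)
    (hlim : ∀ᵐ x ∂μ, Tendsto (fun n => F n x) atTop (nhds 0)) (hM : M ≠ ⊤)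
    (hH : ∀ n, ∫⁻ x, H n x ∂μ ≤ M)
    (hle : ∀ ε : NNReal, 0 < ε → ∃ G : X → ENNReal, AEMeasurable G μ ∧ ∫⁻ x, G x ∂μ ≠ ⊤ ∧
      ∀ n x, F n x ≤ ε * H n x + G x) :
    Tendsto (fun n => ∫⁻ x, F n x ∂μ) atTop (nhds 0) := by
  rw [ENNReal.tendsto_nhds_zero]
  intro δ hδ
  have hδ2 : δ / 2 ≠ 0 := (ENNReal.half_pos hδ.ne').ne'
  obtain ⟨ε, hε, hεM⟩ := ENNReal.exists_nnreal_pos_mul_lt hM hδ2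
  obtain ⟨G, hGm, hG, hFG⟩ := hle ε hε
  have hmin : Tendsto (fun n => ∫⁻ x, min (F n x) (G x) ∂μ) atTop (nhds 0) := by
    have := tendsto_lintegral_of_dominated_convergence' (μ := μ) (f := fun _ => 0)
      (F := fun n x => min (F n x) (G x)) G
      (fun n => (hF n).inf hGm) (fun n => ae_of_all _ fun x => min_le_right _ _) hG (by
        filter_upwards [hlim] with x hx
        exact tendsto_of_tendsto_of_tendsto_of_le_of_le tendsto_const_nhds hx
          (fun n => zero_le) (fun n => min_le_left _ _))
    simpa using this
  filter_upwards [ENNReal.tendsto_nhds_zero.1 hmin (δ / 2) (pos_iff_ne_zero.2 hδ2)] with n hn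
  calc ∫⁻ x, F n x ∂μ ≤ ∫⁻ x, min (F n x) (G x) + ε * H n x ∂μ := by
        refine lintegral_mono fun x => ?_
        rcases le_total (F n x) (G x) with h | h
        · rw [min_eq_left h]
          exact le_self_add
        · rw [min_eq_right h, add_comm]
          exact hFG n x
    _ = ∫⁻ x, min (F n x) (G x) ∂μ + ε * ∫⁻ x, H n x ∂μ := by
        rw [lintegral_add_left' (f := fun x => min (F n x) (G x)) ((hF n).inf hGm),
          lintegral_const_mul' _ _ ENNReal.coe_ne_top]
    _ ≤ δ / 2 + δ / 2 := by
        refine add_le_add hn (le_trans ?_ hεM.le)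
        gcongr
        exact hH n
    _ = δ := ENNReal.add_halves δ

theorem ENNReal.max_rpow_le_add (q : ℝ) (a b : ENNReal) :
    max a b ^ q ≤ a ^ q + b ^ q := by
  rcases le_total a b with h | h
  · rw [max_eq_right h]
    exact le_add_self
  · rw [max_eq_left h]
    exact le_self_add

theorem lintegral_max_rpow_le {X : Type*} [MeasurableSpace X] {μ : Measure X} (q : ℝ)
    {f g : X → ENNReal} (hf : AEMeasurable f μ) :
    ∫⁻ x, max (f x) (g x) ^ q ∂μ ≤ ∫⁻ x, f x ^ q ∂μ + ∫⁻ x, g x ^ q ∂μ := by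
  rw [← lintegral_add_left' (hf.pow_const q)]
  exact lintegral_mono fun x => ENNReal.max_rpow_le_add q _ _

theorem exists_rieszEnergy_le {N : ℕ} {α : ℝ} (hα : α ∈ Set.Ioo (0:ℝ) N) :
    ∃ c : ENNReal, c ≠ ⊤ ∧ ∀ (f g : EuclideanSpace ℝ (Fin N) → ENNReal) (S : ENNReal),
      AEMeasurable f volume → AEMeasurable g volume →
      (∫⁻ y, f y ^ (2 * (N:ℝ) / ((N:ℝ) + α))) + (∫⁻ y, g y ^ (2 * (N:ℝ) / ((N:ℝ) + α))) ≤ S →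
      rieszEnergy N α f g ≤ c * (1 + S ^ (1 / (2 * (N:ℝ) / ((N:ℝ) + α)))) * S := by
  have hq := (hardyLittlewoodSobolev_holderConjugate hα).pos
  obtain ⟨c, hc, h⟩ := exists_rieszEnergy_self_le hα
  refine ⟨c, hc, fun f g S hf hg hS => ?_⟩
  have hmax := (lintegral_max_rpow_le _ (g := g) hf).trans hS
  calc rieszEnergy N α f g
      ≤ rieszEnergy N α (fun x => max (f x) (g x)) (fun x => max (f x) (g x)) :=
        rieszEnergy_mono (fun x => le_max_left _ _) (fun x => le_max_right _ _)
    _ ≤ _ := h _ (hf.sup hg)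
    _ ≤ _ := by gcongr

theorem rieszEnergy_ne_top {N : ℕ} {α : ℝ} (hα : α ∈ Set.Ioo (0:ℝ) N)
    {f g : EuclideanSpace ℝ (Fin N) → ENNReal}
    (hf : AEMeasurable f volume) (hg : AEMeasurable g volume)
    (hfS : ∫⁻ y, f y ^ (2 * (N:ℝ) / ((N:ℝ) + α)) ≠ ⊤)
    (hgS : ∫⁻ y, g y ^ (2 * (N:ℝ) / ((N:ℝ) + α)) ≠ ⊤) :
    rieszEnergy N α f g ≠ ⊤ := by
  have hq := (hardyLittlewoodSobolev_holderConjugate hα).pos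
  obtain ⟨c, hc, h⟩ := exists_rieszEnergy_le hα
  have hS := ENNReal.add_ne_top.2 ⟨hfS, hgS⟩
  exact ne_top_of_le_ne_top (ENNReal.mul_ne_top (ENNReal.mul_ne_top hc (ENNReal.add_ne_top.2
    ⟨ENNReal.one_ne_top, ENNReal.rpow_ne_top_of_nonneg (by positivity) hS⟩)) hS)
    (h f g _ hf hg le_rfl)

theorem rieszEnergy_mul_inv {N : ℕ} {α : ℝ} {t : ENNReal} (ht0 : t ≠ 0) (ht : t ≠ ⊤)
    (f g : EuclideanSpace ℝ (Fin N) → ENNReal) :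
    rieszEnergy N α (fun x => t * f x) (fun x => t⁻¹ * g x) = rieszEnergy N α f g := by
  refine lintegral_congr fun z => ?_
  rw [mul_mul_mul_comm, ENNReal.mul_inv_cancel ht0 ht, one_mul]

theorem tendsto_rieszEnergy_zero_of_tendsto {N : ℕ} {α : ℝ} (hα : α ∈ Set.Ioo (0:ℝ) N)
    {f g : ℕ → EuclideanSpace ℝ (Fin N) → ENNReal}
    (hf : ∀ n, AEMeasurable (f n) volume) (hg : ∀ n, AEMeasurable (g n) volume)
    (hfS : Tendsto (fun n => ∫⁻ y, f n y ^ (2 * (N:ℝ) / ((N:ℝ) + α))) atTop (nhds 0))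
    {M : ENNReal} (hM : M ≠ ⊤) (hgS : ∀ n, ∫⁻ y, g n y ^ (2 * (N:ℝ) / ((N:ℝ) + α)) ≤ M) :
    Tendsto (fun n => rieszEnergy N α (f n) (g n)) atTop (nhds 0) := by
  have hq := (hardyLittlewoodSobolev_holderConjugate hα).pos
  obtain ⟨c, hc, h⟩ := exists_rieszEnergy_le hα
  set q : ℝ := 2 * (N:ℝ) / ((N:ℝ) + α)
  rw [ENNReal.tendsto_nhds_zero]
  intro δ hδ
  obtain ⟨η, hη, hηc⟩ := ENNReal.exists_nnreal_pos_mul_lt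
    (ENNReal.mul_ne_top hc (ENNReal.natCast_ne_top 2)) hδ.ne'
  obtain ⟨S, hS0, hS1, hSη⟩ : ∃ S : NNReal, 0 < S ∧ S ≤ 1 ∧ S ≤ η :=
    ⟨min 1 η, lt_min one_pos hη, min_le_left _ _, min_le_right _ _⟩
  have hS2 : (S : ENNReal) / 2 ≠ 0 := (ENNReal.half_pos (by simpa using hS0.ne')).ne'
  obtain ⟨τ, hτ, hτM⟩ := ENNReal.exists_nnreal_pos_mul_lt hM hS2
  have hτ0 : (τ : ENNReal) ≠ 0 := by simpa using hτ.ne'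
  have hfS' : Tendsto (fun n => (τ : ENNReal)⁻¹ * ∫⁻ y, f n y ^ q) atTop (nhds 0) := by
    simpa using ENNReal.Tendsto.const_mul hfS (Or.inr (ENNReal.inv_ne_top.2 hτ0))
  filter_upwards [ENNReal.tendsto_nhds_zero.1 hfS' _ (pos_iff_ne_zero.2 hS2)] with n hn
  set t : ENNReal := (τ : ENNReal) ^ (-(1 / q)) with ht
  have ht0 : t ≠ 0 := (ENNReal.rpow_pos (by simpa using hτ) ENNReal.coe_ne_top).ne'
  have htt : t ≠ ⊤ := ENNReal.rpow_ne_top_of_ne_zero hτ0 ENNReal.coe_ne_top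
  have htq : t ^ q = (τ : ENNReal)⁻¹ := by
    rw [ht, ← ENNReal.rpow_mul, ← ENNReal.rpow_neg_one]
    congr 1
    field_simp
  have hscale : ∀ (s : ENNReal) (φ : EuclideanSpace ℝ (Fin N) → ENNReal), s ≠ ⊤ →
      ∫⁻ y, (s * φ y) ^ q = s ^ q * ∫⁻ y, φ y ^ q := by
    intro s φ hs
    simp_rw [ENNReal.mul_rpow_of_nonneg _ _ hq.le]
    exact lintegral_const_mul' _ _ (ENNReal.rpow_ne_top_of_nonneg hq.le hs)
  have hbound := h (fun x => t * f n x) (fun x => t⁻¹ * g n x) S ((hf n).const_mul t)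
    ((hg n).const_mul t⁻¹) (by
      rw [hscale _ _ htt, hscale _ _ (ENNReal.inv_ne_top.2 ht0), ENNReal.inv_rpow, htq, inv_inv,
        ← ENNReal.add_halves (S : ENNReal)]
      refine add_le_add hn (le_trans ?_ hτM.le)
      gcongr
      exact hgS n)
  rw [rieszEnergy_mul_inv ht0 htt] at hbound
  refine hbound.trans (le_trans ?_ hηc.le)
  have hS1' : (S : ENNReal) ^ (1 / q) ≤ 1 :=
    ENNReal.rpow_le_one (by exact_mod_cast hS1) (by positivity)
  calc c * (1 + (S : ENNReal) ^ (1 / q)) * S ≤ c * (1 + 1) * η := by gcongr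
    _ = η * (c * (2 : ℕ)) := by
      rw [mul_comm]
      norm_num

theorem lintegral_rpow_ne_top_of_forall_lintegral_mul_le {X : Type*} [MeasurableSpace X]
    {μ : Measure X} [SigmaFinite μ] {q q' : ℝ} (hpq : q.HolderConjugate q') {h : X → ENNReal}
    (hh : AEMeasurable h μ) {C : ENNReal} (hC : C ≠ ⊤)
    (hle : ∀ g : X → ENNReal, AEMeasurable g μ → ∫⁻ x, g x ^ q ∂μ ≤ 1 → ∫⁻ x, g x * h x ∂μ ≤ C) :
    ∫⁻ x, h x ^ q' ∂μ ≠ ⊤ := by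
  have hq' := hpq.symm.pos
  set φ : ℕ → X → ENNReal := fun n => (spanningSets μ n).indicator (fun x => min (h x) n) with hφ
  have hφm : ∀ n, AEMeasurable (φ n) μ := fun n =>
    (hh.inf aemeasurable_const).indicator (measurableSet_spanningSets μ n)
  have hφle : ∀ n x, φ n x ≤ h x := fun n x =>
    (Set.indicator_le_self _ _ x).trans (min_le_left _ _)
  have hφlim : ∀ x, Tendsto (fun n => φ n x) atTop (nhds (h x)) := by
    intro x
    have h1 : Tendsto (fun n : ℕ => min (h x) (n : ENNReal)) atTop (nhds (min (h x) ⊤)) :=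
      tendsto_const_nhds.min ENNReal.tendsto_nat_nhds_top
    rw [min_eq_left le_top] at h1
    refine h1.congr' ?_
    filter_upwards [eventually_mem_spanningSets μ x] with n hn
    rw [hφ]
    simp only [Set.indicator_of_mem hn]
  have hbound : ∀ n, ∫⁻ x, φ n x ^ q' ∂μ ≤ C ^ q' := by
    intro n
    set T := ∫⁻ x, φ n x ^ q' ∂μ with hT
    have hTt : T ≠ ⊤ := by
      refine ne_top_of_le_ne_top (ENNReal.mul_ne_top
        (ENNReal.rpow_ne_top_of_nonneg hq'.le (ENNReal.natCast_ne_top n))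
        (measure_spanningSets_lt_top μ n).ne) ?_
      rw [← lintegral_indicator_const (measurableSet_spanningSets μ n)]
      refine lintegral_mono fun x => ?_
      by_cases hx : x ∈ spanningSets μ n
      · simp only [hφ, Set.indicator_of_mem hx]
        gcongr
        exact min_le_right _ _
      · simp [hφ, Set.indicator_of_notMem hx, hq']
    rcases eq_or_ne T 0 with hT0 | hT0
    · rw [hT0]
      exact zero_le
    have hexp : (q' - 1) * q = q' := by
      have := hpq.symm.sub_one_mul_conj
      linarith
    have hs : T ^ (-(1 / q)) ≠ ⊤ := ENNReal.rpow_ne_top_of_ne_zero hT0 hTt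
    have hg := hle (fun x => T ^ (-(1 / q)) * φ n x ^ (q' - 1))
      (((hφm n).pow_const _).const_mul _) (by
        simp_rw [ENNReal.mul_rpow_of_nonneg _ _ hpq.nonneg, ← ENNReal.rpow_mul, hexp]
        rw [lintegral_const_mul' _ _ (ENNReal.rpow_ne_top_of_ne_zero hT0 hTt), ← hT,
          show -(1 / q) * q = -1 by field_simp [hpq.ne_zero], ENNReal.rpow_neg_one,
          ENNReal.inv_mul_cancel hT0 hTt])
    have hlow : T ^ (1 / q') ≤ C := by
      refine le_trans ?_ hg
      calc T ^ (1 / q') = T ^ (-(1 / q)) * T := by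
            nth_rewrite 3 [← ENNReal.rpow_one T]
            rw [← ENNReal.rpow_add _ _ hT0 hTt]
            congr 1
            have := hpq.inv_add_inv_eq_one
            rw [one_div, one_div]
            linarith
        _ = ∫⁻ x, T ^ (-(1 / q)) * φ n x ^ q' ∂μ := by rw [lintegral_const_mul' _ _ hs]
        _ ≤ _ := by
            refine lintegral_mono fun x => ?_
            rw [mul_assoc]
            gcongr
            calc φ n x ^ q' = φ n x ^ ((q' - 1) + 1) := by rw [sub_add_cancel]
              _ = φ n x ^ (q' - 1) * φ n x := by
                rw [ENNReal.rpow_add_of_nonneg _ _ (by linarith [hpq.symm.lt]) zero_le_one,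
                  ENNReal.rpow_one]
              _ ≤ _ := by
                gcongr
                exact hφle n x
    calc T = (T ^ (1 / q')) ^ q' := by
          rw [← ENNReal.rpow_mul, one_div, inv_mul_cancel₀ hq'.ne', ENNReal.rpow_one]
      _ ≤ C ^ q' := by gcongr
  refine ne_top_of_le_ne_top (ENNReal.rpow_ne_top_of_nonneg hq'.le hC) ?_
  calc ∫⁻ x, h x ^ q' ∂μ = ∫⁻ x, liminf (fun n => φ n x ^ q') atTop ∂μ := by
        refine lintegral_congr fun x => ?_
        exact (((ENNReal.continuous_rpow_const (y := q')).tendsto _).comp (hφlim x)).liminf_eq.symm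
    _ ≤ liminf (fun n => ∫⁻ x, φ n x ^ q' ∂μ) atTop :=
        lintegral_liminf_le' fun n => (hφm n).pow_const q'
    _ ≤ C ^ q' := liminf_le_of_le (by isBoundedDefault) fun b hb => by
        obtain ⟨n, hn⟩ := hb.exists
        exact hn.trans (hbound n)

theorem rieszEnergy_eq_lintegral_mul {N : ℕ} {α : ℝ}
    {f g : EuclideanSpace ℝ (Fin N) → ENNReal}
    (hf : AEMeasurable f volume) (hg : AEMeasurable g volume) :
    rieszEnergy N α g f = ∫⁻ x, g x * ∫⁻ y, f y * rieszKernel N α (x - y) := by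
  rw [rieszEnergy, Measure.volume_eq_prod,
    lintegral_prod _ (aemeasurable_rieszEnergy_integrand α hg hf)]
  refine lintegral_congr fun x => ?_
  simp_rw [mul_assoc]
  exact lintegral_const_mul'' _ (hf.mul
    ((measurable_rieszKernel N α).comp (by fun_prop)).aemeasurable)

theorem tendsto_rieszEnergy_zero_of_ae_tendsto {N : ℕ} {α : ℝ} (hα : α ∈ Set.Ioo (0:ℝ) N)
    {f : EuclideanSpace ℝ (Fin N) → ENNReal} {g : ℕ → EuclideanSpace ℝ (Fin N) → ENNReal}
    (hf : AEMeasurable f volume) (hg : ∀ n, AEMeasurable (g n) volume)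
    (hfS : ∫⁻ y, f y ^ (2 * (N:ℝ) / ((N:ℝ) + α)) ≠ ⊤)
    {M : ENNReal} (hM : M ≠ ⊤) (hgS : ∀ n, ∫⁻ y, g n y ^ (2 * (N:ℝ) / ((N:ℝ) + α)) ≤ M)
    (hlim : ∀ᵐ x : EuclideanSpace ℝ (Fin N), Tendsto (fun n => g n x) atTop (nhds 0)) :
    Tendsto (fun n => rieszEnergy N α (g n) f) atTop (nhds 0) := by
  have hpq := hardyLittlewoodSobolev_holderConjugate hα
  obtain ⟨c, hc, hE⟩ := exists_rieszEnergy_le hα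
  set q : ℝ := 2 * (N:ℝ) / ((N:ℝ) + α)
  set q' : ℝ := 2 * (N:ℝ) / ((N:ℝ) - α)
  have hq := hpq.pos
  have hq' := hpq.symm.pos
  set h : EuclideanSpace ℝ (Fin N) → ENNReal := fun x => ∫⁻ y, f y * rieszKernel N α (x - y) with hh
  have hhm : AEMeasurable h volume := by
    have := (aemeasurable_rieszEnergy_integrand α (f := fun _ => 1) aemeasurable_const hf)
    simp only [one_mul] at this
    exact AEMeasurable.lintegral_prod_right' this
  set S : ENNReal := 1 + ∫⁻ y, f y ^ q with hS
  have hSt : S ≠ ⊤ := ENNReal.add_ne_top.2 ⟨ENNReal.one_ne_top, hfS⟩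
  have hhq : ∫⁻ x, h x ^ q' ≠ ⊤ := by
    refine lintegral_rpow_ne_top_of_forall_lintegral_mul_le hpq hhm
      (C := c * (1 + S ^ (1 / q)) * S) (ENNReal.mul_ne_top (ENNReal.mul_ne_top hc
        (ENNReal.add_ne_top.2 ⟨ENNReal.one_ne_top,
          ENNReal.rpow_ne_top_of_nonneg (by positivity) hSt⟩)) hSt) fun φ hφ hφS => ?_
    rw [hh, ← rieszEnergy_eq_lintegral_mul hf hφ]
    exact hE φ f S hφ hf (by rw [hS]; gcongr)
  have hfin : ∀ᵐ x : EuclideanSpace ℝ (Fin N), h x ≠ ⊤ := by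
    filter_upwards [ae_lt_top' (hhm.pow_const q') hhq] with x hx
    intro hx'
    simp [hx', hq'] at hx
  simp_rw [rieszEnergy_eq_lintegral_mul hf (hg _)]
  refine tendsto_lintegral_zero_of_le_add (F := fun n x => g n x * h x)
    (H := fun n x => g n x ^ q) (fun n => (hg n).mul hhm) ?_ hM hgS fun ε hε => ?_
  · filter_upwards [hlim, hfin] with x hx hx'
    simpa using ENNReal.Tendsto.mul_const hx (Or.inr hx')
  · set t : ENNReal := (ε : ENNReal) ^ (1 / q) with ht
    have ht0 : t ≠ 0 := (ENNReal.rpow_pos (by simpa using hε) ENNReal.coe_ne_top).ne'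
    have htt : t ≠ ⊤ := ENNReal.rpow_ne_top_of_nonneg (by positivity) ENNReal.coe_ne_top
    have htq : t ^ q = ε := by
      rw [ht, ← ENNReal.rpow_mul, one_div, inv_mul_cancel₀ hq.ne', ENNReal.rpow_one]
    have hti : t⁻¹ ^ q' ≠ ⊤ := ENNReal.rpow_ne_top_of_nonneg hq'.le (ENNReal.inv_ne_top.2 ht0)
    refine ⟨fun x => t⁻¹ ^ q' * h x ^ q', (hhm.pow_const q').const_mul _, ?_, fun n x => ?_⟩
    · rw [lintegral_const_mul' _ _ hti]
      exact ENNReal.mul_ne_top hti hhq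
    · calc g n x * h x = (t * g n x) * (t⁻¹ * h x) := by
            rw [mul_mul_mul_comm, ENNReal.mul_inv_cancel ht0 htt, one_mul]
        _ ≤ (t * g n x) ^ q / ENNReal.ofReal q + (t⁻¹ * h x) ^ q' / ENNReal.ofReal q' :=
            ENNReal.young_inequality _ _ hpq
        _ ≤ (t * g n x) ^ q + (t⁻¹ * h x) ^ q' := by
            refine add_le_add (ENNReal.div_le_of_le_mul ?_) (ENNReal.div_le_of_le_mul ?_)
            · exact le_mul_of_one_le_right' (ENNReal.one_le_ofReal.2 hpq.lt.le)
            · exact le_mul_of_one_le_right' (ENNReal.one_le_ofReal.2 hpq.symm.lt.le)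
        _ = ε * g n x ^ q + t⁻¹ ^ q' * h x ^ q' := by
            rw [ENNReal.mul_rpow_of_nonneg _ _ hq.le, ENNReal.mul_rpow_of_nonneg _ _ hq'.le, htq]

theorem exists_abs_rpow_add_sub_le {p : ℝ} (hp : 0 < p) {ε : ℝ} (hε : 0 < ε) :
    ∃ C : ℝ, 0 ≤ C ∧ ∀ a b : ℝ, |(|a + b| ^ p - |a| ^ p - |b| ^ p)| ≤ ε * |a| ^ p ∨
      |(|a + b| ^ p - |a| ^ p - |b| ^ p)| ≤ C * |b| ^ p := by
  have hcont : Continuous fun t : ℝ => |(|1 + t| ^ p - 1 - |t| ^ p)| := by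
    have h1 : Continuous fun t : ℝ => |1 + t| ^ p :=
      (continuous_abs.comp (by fun_prop)).rpow_const fun _ => Or.inr hp.le
    have h2 : Continuous fun t : ℝ => |t| ^ p :=
      continuous_abs.rpow_const fun _ => Or.inr hp.le
    fun_prop
  have hzero : |(|1 + (0:ℝ)| ^ p - 1 - |(0:ℝ)| ^ p)| < ε := by
    simpa [Real.zero_rpow hp.ne'] using hε
  obtain ⟨δ, hδ, hball⟩ := Metric.eventually_nhds_iff.1 ((hcont.tendsto 0).eventually_lt_const hzero)
  refine ⟨(1 + δ⁻¹) ^ p + δ⁻¹ ^ p + 1, by positivity, fun a b => ?_⟩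
  rcases lt_or_ge |b| (δ * |a|) with h | h
  · left
    have ha : 0 < |a| := by
      by_contra hcon
      have : |a| = 0 := le_antisymm (not_lt.1 hcon) (abs_nonneg a)
      rw [this, mul_zero] at h
      exact absurd h (not_lt.2 (abs_nonneg b))
    have ha' : a ≠ 0 := abs_pos.1 ha
    have ht : |(|1 + b / a| ^ p - 1 - |b / a| ^ p)| < ε := by
      refine hball ?_
      rw [Real.dist_eq, sub_zero, abs_div, div_lt_iff₀ ha]
      exact h
    have hfac : |a + b| ^ p - |a| ^ p - |b| ^ p =
        |a| ^ p * (|1 + b / a| ^ p - 1 - |b / a| ^ p) := by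
      rw [mul_sub, mul_sub, ← Real.mul_rpow (abs_nonneg _) (abs_nonneg _),
        ← Real.mul_rpow (abs_nonneg _) (abs_nonneg _), ← abs_mul, ← abs_mul, mul_add,
        mul_div_cancel₀ _ ha', mul_one, mul_one]
    rw [hfac, abs_mul, abs_of_nonneg (by positivity), mul_comm]
    gcongr
  · right
    have ha : |a| ≤ δ⁻¹ * |b| := by
      rw [inv_mul_eq_div, le_div_iff₀ hδ]
      linarith
    have h1 : |a| ^ p ≤ δ⁻¹ ^ p * |b| ^ p := by
      rw [← Real.mul_rpow (by positivity) (abs_nonneg _)]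
      gcongr
    have h2 : |a + b| ^ p ≤ (1 + δ⁻¹) ^ p * |b| ^ p := by
      rw [← Real.mul_rpow (by positivity) (abs_nonneg _)]
      gcongr
      linarith [abs_add_le a b]
    have h3 : 0 ≤ |a| ^ p := by positivity
    have h4 : 0 ≤ |b| ^ p := by positivity
    have h5 : 0 ≤ |a + b| ^ p := by positivity
    rw [abs_le]
    constructor <;> nlinarith

theorem tendsto_lintegral_abs_rpow_sub_rpow {X : Type*} [MeasurableSpace X] {μ : Measure X}
    {p q : ℝ} (hp : 0 < p) (hq : 0 < q) {u : ℕ → X → ℝ} {v : X → ℝ}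
    (hu : ∀ n, AEMeasurable (u n) μ) (hv : AEMeasurable v μ)
    (hlim : ∀ᵐ x ∂μ, Tendsto (fun n => u n x) atTop (nhds (v x)))
    {M : ENNReal} (hM : M ≠ ⊤)
    (hbdd : ∀ n, ∫⁻ x, ENNReal.ofReal (|u n x - v x| ^ p) ^ q ∂μ ≤ M)
    (hvq : ∫⁻ x, ENNReal.ofReal (|v x| ^ p) ^ q ∂μ ≠ ⊤) :
    Tendsto (fun n => ∫⁻ x,
      ENNReal.ofReal |(|u n x| ^ p - |u n x - v x| ^ p - |v x| ^ p)| ^ q ∂μ) atTop (nhds 0) := by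
  refine tendsto_lintegral_zero_of_le_add
    (H := fun n x => ENNReal.ofReal (|u n x - v x| ^ p) ^ q) (fun n => ?_) ?_ hM hbdd
    fun ε hε => ?_
  · have := hu n
    fun_prop
  · filter_upwards [hlim] with x hx
    have h1 : Continuous fun t : ℝ => |t| ^ p := continuous_abs.rpow_const fun _ => Or.inr hp.le
    have h2 : Continuous fun t : ℝ =>
        ENNReal.ofReal |(|t| ^ p - |t - v x| ^ p - |v x| ^ p)| ^ q := by
      have h3 : Continuous fun t : ℝ => |t - v x| ^ p := h1.comp (by fun_prop)
      have h4 : Continuous fun t : ℝ => ENNReal.ofReal |(|t| ^ p - |t - v x| ^ p - |v x| ^ p)| :=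
        ENNReal.continuous_ofReal.comp (by fun_prop)
      exact ENNReal.continuous_rpow_const.comp h4
    have h5 := (h2.tendsto (v x)).comp hx
    simpa [Function.comp_def, Real.zero_rpow hp.ne', hq] using h5
  · obtain ⟨C, hC, hle⟩ := exists_abs_rpow_add_sub_le hp (ε := (ε:ℝ) ^ (1 / q)) (by positivity)
    have hCq : ENNReal.ofReal C ^ q ≠ ⊤ := ENNReal.rpow_ne_top_of_nonneg hq.le ENNReal.ofReal_ne_top
    refine ⟨fun x => ENNReal.ofReal C ^ q * ENNReal.ofReal (|v x| ^ p) ^ q, by fun_prop, ?_,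
      fun n x => ?_⟩
    · rw [lintegral_const_mul' _ _ hCq]
      exact ENNReal.mul_ne_top hCq hvq
    · have hεq : ENNReal.ofReal ((ε:ℝ) ^ (1 / q)) ^ q = ε := by
        rw [ENNReal.ofReal_rpow_of_nonneg (by positivity) hq.le, ← Real.rpow_mul (by positivity),
          one_div, inv_mul_cancel₀ hq.ne', Real.rpow_one, ENNReal.ofReal_coe_nnreal]
      have hcase := hle (u n x - v x) (v x)
      rw [sub_add_cancel] at hcase
      rcases hcase with h | h
      · refine le_trans ?_ le_self_add
        rw [← hεq, ← ENNReal.mul_rpow_of_nonneg _ _ hq.le, ← ENNReal.ofReal_mul (by positivity)]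
        gcongr
      · refine le_trans ?_ le_add_self
        beta_reduce
        rw [← ENNReal.mul_rpow_of_nonneg _ _ hq.le, ← ENNReal.ofReal_mul hC]
        gcongr

theorem ENNReal.ofReal_abs_rpow_rpow {p q : ℝ} (hp : 0 ≤ p) (t : ℝ) :
    ENNReal.ofReal (|t| ^ p) ^ q = ‖t‖ₑ ^ (p * q) := by
  rw [ENNReal.rpow_mul, Real.enorm_eq_ofReal_abs, ENNReal.ofReal_rpow_of_nonneg (abs_nonneg t) hp]

theorem enorm_sub_rpow_le {s : ℝ} (hs : 0 ≤ s) (a b : ℝ) :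
    ‖a - b‖ₑ ^ s ≤ 2 ^ s * (‖a‖ₑ ^ s + ‖b‖ₑ ^ s) := by
  calc ‖a - b‖ₑ ^ s ≤ (2 * max ‖a‖ₑ ‖b‖ₑ) ^ s := by
        gcongr
        refine enorm_sub_le.trans ?_
        rw [two_mul]
        exact add_le_add (le_max_left _ _) (le_max_right _ _)
    _ = 2 ^ s * max ‖a‖ₑ ‖b‖ₑ ^ s := ENNReal.mul_rpow_of_nonneg _ _ hs
    _ ≤ _ := by
        gcongr
        exact ENNReal.max_rpow_le_add s _ _

/-- The integrand of the Riesz potential energy of `v`. -/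
noncomputable def rieszDensity (N : ℕ) (α p : ℝ) (v : EuclideanSpace ℝ (Fin N) → ℝ)
    (z : EuclideanSpace ℝ (Fin N) × EuclideanSpace ℝ (Fin N)) : ℝ :=
  rieszConst N α * |v z.1| ^ p * |v z.2| ^ p * ‖z.1 - z.2‖ ^ (α - (N:ℝ))

theorem enorm_rieszDensity (N : ℕ) (α p : ℝ) (v : EuclideanSpace ℝ (Fin N) → ℝ)
    (z : EuclideanSpace ℝ (Fin N) × EuclideanSpace ℝ (Fin N)) :
    ‖rieszDensity N α p v z‖ₑ =
      ‖rieszConst N α‖ₑ * (ENNReal.ofReal (|v z.1| ^ p) * ENNReal.ofReal (|v z.2| ^ p) *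
        rieszKernel N α (z.1 - z.2)) := by
  rw [rieszDensity, enorm_mul, enorm_mul, enorm_mul, Real.enorm_of_nonneg (r := |v z.1| ^ p) (by positivity),
    Real.enorm_of_nonneg (r := |v z.2| ^ p) (by positivity),
    Real.enorm_of_nonneg (r := ‖z.1 - z.2‖ ^ (α - (N:ℝ))) (by positivity), rieszKernel]
  ring

theorem integrable_rieszDensity {N : ℕ} {α : ℝ} (hα : α ∈ Set.Ioo (0:ℝ) N) (p : ℝ)
    {v : EuclideanSpace ℝ (Fin N) → ℝ} (hv : AEMeasurable v volume)
    (hvS : ∫⁻ y, ENNReal.ofReal (|v y| ^ p) ^ (2 * (N:ℝ) / ((N:ℝ) + α)) ≠ ⊤) :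
    Integrable (rieszDensity N α p v) (volume.prod volume) := by
  have hvm : AEMeasurable (fun y => ENNReal.ofReal (|v y| ^ p)) volume := by fun_prop
  refine ⟨AEMeasurable.aestronglyMeasurable ?_, ?_⟩
  · have h1 : AEMeasurable (fun z : EuclideanSpace ℝ (Fin N) × EuclideanSpace ℝ (Fin N) =>
      v z.1) (volume.prod volume) := hv.comp_fst
    have h2 : AEMeasurable (fun z : EuclideanSpace ℝ (Fin N) × EuclideanSpace ℝ (Fin N) =>
      v z.2) (volume.prod volume) := hv.comp_snd
    unfold rieszDensity
    fun_prop
  · rw [hasFiniteIntegral_iff_enorm]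
    simp_rw [enorm_rieszDensity]
    rw [lintegral_const_mul' _ _ enorm_ne_top]
    exact (ENNReal.mul_ne_top enorm_ne_top (rieszEnergy_ne_top hα hvm hvm hvS hvS)).lt_top

theorem integral_rieszDensity {N : ℕ} {α p : ℝ} {v : EuclideanSpace ℝ (Fin N) → ℝ}
    (hv : Integrable (rieszDensity N α p v) (volume.prod volume)) :
    ∫ z, rieszDensity N α p v z ∂(volume.prod volume) = nonlocalB N α p v :=
  integral_prod _ hv

theorem abs_mul_sub_mul_sub_mul_le {a a' b b' c c' : ℝ} (ha' : 0 ≤ a') (hb : 0 ≤ b) (hb' : 0 ≤ b')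
    (hc : 0 ≤ c) (hc' : 0 ≤ c') :
    |a * a' - b * b' - c * c'| ≤ b * c' + c * b' + |a - b - c| * a' + b * |a' - b' - c'| +
      c * |a' - b' - c'| := by
  have h : a * a' - b * b' - c * c' = b * c' + c * b' + (a - b - c) * a' + b * (a' - b' - c') +
      c * (a' - b' - c') := by ring
  rw [h]
  refine (abs_add_le _ _).trans (add_le_add ((abs_add_le _ _).trans (add_le_add
    ((abs_add_le _ _).trans (add_le_add ((abs_add_le _ _).trans (add_le_add ?_ ?_)) ?_)) ?_)) ?_)
  all_goals simp only [abs_mul, abs_of_nonneg ha', abs_of_nonneg hb, abs_of_nonneg hb',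
    abs_of_nonneg hc, abs_of_nonneg hc', le_refl]

theorem lintegral_enorm_rieszDensity_sub_le {N : ℕ} {α p : ℝ} {u v w : EuclideanSpace ℝ (Fin N) → ℝ}
    (hu : AEMeasurable u volume) (hv : AEMeasurable v volume) (hw : AEMeasurable w volume) :
    ∫⁻ z : EuclideanSpace ℝ (Fin N) × EuclideanSpace ℝ (Fin N),
      ‖(rieszDensity N α p u z -
        rieszDensity N α p v z) -
        rieszDensity N α p w z‖ₑ
        ∂(volume.prod volume) ≤
    ‖rieszConst N α‖ₑ *
      (rieszEnergy N α (fun x => ENNReal.ofReal (|v x| ^ p)) (fun x => ENNReal.ofReal (|w x| ^ p)) +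
      rieszEnergy N α (fun x => ENNReal.ofReal (|w x| ^ p)) (fun x => ENNReal.ofReal (|v x| ^ p)) +
      rieszEnergy N α (fun x => ENNReal.ofReal |(|u x| ^ p - |v x| ^ p - |w x| ^ p)|)
        (fun x => ENNReal.ofReal (|u x| ^ p)) +
      rieszEnergy N α (fun x => ENNReal.ofReal (|v x| ^ p))
        (fun x => ENNReal.ofReal |(|u x| ^ p - |v x| ^ p - |w x| ^ p)|) +
      rieszEnergy N α (fun x => ENNReal.ofReal (|w x| ^ p))
        (fun x => ENNReal.ofReal |(|u x| ^ p - |v x| ^ p - |w x| ^ p)|)) := by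
  set A : EuclideanSpace ℝ (Fin N) → ENNReal := fun x => ENNReal.ofReal (|u x| ^ p)
  set B : EuclideanSpace ℝ (Fin N) → ENNReal := fun x => ENNReal.ofReal (|v x| ^ p)
  set C : EuclideanSpace ℝ (Fin N) → ENNReal := fun x => ENNReal.ofReal (|w x| ^ p)
  set D : EuclideanSpace ℝ (Fin N) → ENNReal :=
    fun x => ENNReal.ofReal |(|u x| ^ p - |v x| ^ p - |w x| ^ p)|
  have hA : AEMeasurable A volume := by fun_prop
  have hB : AEMeasurable B volume := by fun_prop
  have hC : AEMeasurable C volume := by fun_prop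
  have hD : AEMeasurable D volume := by fun_prop
  unfold rieszEnergy
  rw [← lintegral_add_right' _ (aemeasurable_rieszEnergy_integrand α hC hB),
    ← lintegral_add_right' _ (aemeasurable_rieszEnergy_integrand α hD hA),
    ← lintegral_add_right' _ (aemeasurable_rieszEnergy_integrand α hB hD),
    ← lintegral_add_right' _ (aemeasurable_rieszEnergy_integrand α hC hD),
    ← lintegral_const_mul' _ _ enorm_ne_top]
  refine lintegral_mono fun z => ?_
  rw [show rieszDensity N α p u z -
        rieszDensity N α p v z -
        rieszDensity N α p w z =
      rieszConst N α * ((|u z.1| ^ p * |u z.2| ^ p - |v z.1| ^ p * |v z.2| ^ p -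
        |w z.1| ^ p * |w z.2| ^ p) * ‖z.1 - z.2‖ ^ (α - (N:ℝ))) by simp only [rieszDensity]; ring, enorm_mul, enorm_mul,
    Real.enorm_of_nonneg (r := ‖z.1 - z.2‖ ^ (α - (N:ℝ))) (by positivity), ← rieszKernel,
    ← add_mul, ← add_mul, ← add_mul, ← add_mul, Real.enorm_eq_ofReal_abs
      (|u z.1| ^ p * |u z.2| ^ p - |v z.1| ^ p * |v z.2| ^ p - |w z.1| ^ p * |w z.2| ^ p)]
  gcongr
  refine (ENNReal.ofReal_le_ofReal (abs_mul_sub_mul_sub_mul_le (by positivity) (by positivity)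
    (by positivity) (by positivity) (by positivity))).trans_eq ?_
  simp only [A, B, C, D]
  rw [ENNReal.ofReal_add (by positivity) (by positivity),
    ENNReal.ofReal_add (by positivity) (by positivity),
    ENNReal.ofReal_add (by positivity) (by positivity),
    ENNReal.ofReal_add (by positivity) (by positivity)]
  simp only [ENNReal.ofReal_mul (Real.rpow_nonneg (abs_nonneg _) _),
    ENNReal.ofReal_mul (abs_nonneg _)]

/-- the Brezis–Lieb lemma for the Riesz potential energy. -/
theorem stmt_13 (N : ℕ) (hN : 3 ≤ N) (α : ℝ) (hα : α ∈ Set.Ioo (0:ℝ) N)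
    (p : ℝ) (hp : p ∈ Set.Icc (1:ℝ) (((N:ℝ) + α) / ((N:ℝ) - 2)))
    (u : ℕ → EuclideanSpace ℝ (Fin N) → ℝ) (u₀ : EuclideanSpace ℝ (Fin N) → ℝ)
    (hmeas : ∀ n, AEStronglyMeasurable (u n) volume)
    (hbdd : ∃ M : ENNReal, M < ⊤ ∧ ∀ n,
      eLpNorm (u n) (ENNReal.ofReal (2 * (N:ℝ) * p / ((N:ℝ) + α))) volume ≤ M)
    (hae : ∀ᵐ x : EuclideanSpace ℝ (Fin N) ∂volume,
      Tendsto (fun n => u n x) atTop (nhds (u₀ x))) :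
    Tendsto (fun n => nonlocalB N α p (u n) -
        nonlocalB N α p (fun x => u n x - u₀ x)) atTop
      (nhds (nonlocalB N α p u₀)) := by
  obtain ⟨M, hM, hbdd⟩ := hbdd
  have hp0 : 0 < p := one_pos.trans_le hp.1
  have hq := (hardyLittlewoodSobolev_holderConjugate hα).pos
  set q : ℝ := 2 * (N:ℝ) / ((N:ℝ) + α) with hqdef
  have hs : 0 < p * q := mul_pos hp0 hq
  have hsq : 2 * (N:ℝ) * p / ((N:ℝ) + α) = p * q := by
    rw [hqdef]
    ring
  rw [hsq] at hbdd
  have hu : ∀ n, AEMeasurable (u n) volume := fun n => (hmeas n).aemeasurable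
  have hu₀ : AEMeasurable u₀ volume := (aestronglyMeasurable_of_tendsto_ae _ hmeas hae).aemeasurable
  have huS : ∀ n, ∫⁻ x, ‖u n x‖ₑ ^ (p * q) ≤ M ^ (p * q) := by
    intro n
    have h := hbdd n
    rw [eLpNorm_eq_lintegral_rpow_enorm_toReal (by simpa using hs) ENNReal.ofReal_ne_top,
      ENNReal.toReal_ofReal hs.le, one_div, ENNReal.rpow_inv_le_iff hs] at h
    exact h
  have hu₀S : ∫⁻ x, ‖u₀ x‖ₑ ^ (p * q) ≤ M ^ (p * q) := by
    calc ∫⁻ x, ‖u₀ x‖ₑ ^ (p * q) = ∫⁻ x, liminf (fun n => ‖u n x‖ₑ ^ (p * q)) atTop := by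
          refine lintegral_congr_ae ?_
          filter_upwards [hae] with x hx
          exact (((ENNReal.continuous_rpow_const (y := p * q)).tendsto _).comp
            hx.enorm).liminf_eq.symm
      _ ≤ liminf (fun n => ∫⁻ x, ‖u n x‖ₑ ^ (p * q)) atTop :=
          lintegral_liminf_le' fun n => ((hu n).enorm.pow_const _)
      _ ≤ M ^ (p * q) := liminf_le_of_le (by isBoundedDefault) fun b hb => by
          obtain ⟨n, hn⟩ := hb.exists
          exact hn.trans (huS n)
  have hMt : M ^ (p * q) ≠ ⊤ := ENNReal.rpow_ne_top_of_nonneg hs.le hM.ne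
  set K : ENNReal := 2 ^ (p * q) * (M ^ (p * q) + M ^ (p * q)) with hK
  have hKt : K ≠ ⊤ := ENNReal.mul_ne_top
    (ENNReal.rpow_ne_top_of_nonneg hs.le (by simp)) (ENNReal.add_ne_top.2 ⟨hMt, hMt⟩)
  have hdS : ∀ n, ∫⁻ x, ‖u n x - u₀ x‖ₑ ^ (p * q) ≤ K := by
    intro n
    calc _ ≤ ∫⁻ x, 2 ^ (p * q) * (‖u n x‖ₑ ^ (p * q) + ‖u₀ x‖ₑ ^ (p * q)) :=
          lintegral_mono fun x => enorm_sub_rpow_le hs.le _ _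
      _ ≤ K := by
          rw [lintegral_const_mul' _ _ (ENNReal.rpow_ne_top_of_nonneg hs.le (by simp)),
            lintegral_add_left' ((hu n).enorm.pow_const _), hK]
          gcongr
          exact huS n
  simp_rw [← ENNReal.ofReal_abs_rpow_rpow hp0.le] at huS hu₀S hdS
  have hd : ∀ n, AEMeasurable (fun x => u n x - u₀ x) volume := fun n => (hu n).sub hu₀
  have hw := tendsto_lintegral_abs_rpow_sub_rpow hp0 hq hu hu₀ hae hKt hdS
    (ne_top_of_le_ne_top hMt hu₀S)
  have hAm : ∀ n, AEMeasurable (fun x => ENNReal.ofReal (|u n x| ^ p)) volume := fun n => by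
    have := hu n
    fun_prop
  have hBm : ∀ n, AEMeasurable (fun x => ENNReal.ofReal (|u n x - u₀ x| ^ p)) volume := fun n => by
    have := hu n
    fun_prop
  have hCm : AEMeasurable (fun x => ENNReal.ofReal (|u₀ x| ^ p)) volume := by fun_prop
  have hDm : ∀ n, AEMeasurable (fun x => ENNReal.ofReal
      |(|u n x| ^ p - |u n x - u₀ x| ^ p - |u₀ x| ^ p)|) volume := fun n => by
    have := hu n
    fun_prop
  have hBlim : ∀ᵐ x : EuclideanSpace ℝ (Fin N),
      Tendsto (fun n => ENNReal.ofReal (|u n x - u₀ x| ^ p)) atTop (nhds 0) := by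
    filter_upwards [hae] with x hx
    have h1 : Tendsto (fun n => |u n x - u₀ x| ^ p) atTop (nhds (|u₀ x - u₀ x| ^ p)) :=
      ((hx.sub_const (u₀ x)).abs).rpow_const (Or.inr hp0.le)
    simpa [Real.zero_rpow hp0.ne'] using ENNReal.tendsto_ofReal h1
  have hBC := tendsto_rieszEnergy_zero_of_ae_tendsto hα hCm hBm (ne_top_of_le_ne_top hMt hu₀S) hKt
    hdS hBlim
  have hDA := tendsto_rieszEnergy_zero_of_tendsto hα hDm hAm hw hMt huS
  have hDB := tendsto_rieszEnergy_zero_of_tendsto hα hDm hBm hw hKt hdS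
  have hDC := tendsto_rieszEnergy_zero_of_tendsto hα hDm (fun _ => hCm) hw hMt (fun _ => hu₀S)
  have hCB := hBC
  simp_rw [rieszEnergy_comm N α (fun x => ENNReal.ofReal (|u _ x - u₀ x| ^ p))
    (fun x => ENNReal.ofReal (|u₀ x| ^ p))] at hCB
  simp_rw [rieszEnergy_comm N α (fun x => ENNReal.ofReal
      |(|u _ x| ^ p - |u _ x - u₀ x| ^ p - |u₀ x| ^ p)|)] at hDB hDC
  have hsum := ENNReal.Tendsto.const_mul (a := ‖rieszConst N α‖ₑ)
    ((((hBC.add hCB).add hDA).add hDB).add hDC) (Or.inr enorm_ne_top)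
  simp only [add_zero, mul_zero] at hsum
  have hiu : ∀ n, Integrable (rieszDensity N α p (u n)) (volume.prod volume) := fun n =>
    integrable_rieszDensity hα p (hu n) (ne_top_of_le_ne_top hMt (huS n))
  have hid : ∀ n, Integrable (rieszDensity N α p fun x => u n x - u₀ x) (volume.prod volume) :=
    fun n => integrable_rieszDensity hα p (hd n) (ne_top_of_le_ne_top hKt (hdS n))
  have hi₀ := integrable_rieszDensity hα p hu₀ (ne_top_of_le_ne_top hMt hu₀S)
  have hmain := tendsto_integral_of_L1 (rieszDensity N α p u₀) hi₀.aestronglyMeasurable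
    (F := fun n z => rieszDensity N α p (u n) z - rieszDensity N α p (fun x => u n x - u₀ x) z)
    (Eventually.of_forall fun n => (hiu n).sub (hid n))
    (tendsto_of_tendsto_of_tendsto_of_le_of_le tendsto_const_nhds hsum (fun n => zero_le)
      (fun n => lintegral_enorm_rieszDensity_sub_le (hu n) (hd n) hu₀))
  rw [integral_rieszDensity hi₀] at hmain
  refine hmain.congr fun n => ?_
  rw [integral_sub (hiu n) (hid n), integral_rieszDensity (hiu n), integral_rieszDensity (hid n)]
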